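/- arXiv:2009.08527 — 2 statements merged into one kernel-verified Lean document; each statement's English description precedes it below -/
import Mathlib

section
/- The K-algebra homomorphism φ from the free associative K-algebra on the four generators x_{11}, x_{12}, x_{21}, x_{22} to 𝒜 = F/I, sending each generator to the class of the corresponding generator of F, is injective. -/
namespace NCP

/-- The free associative `K`-algebra on the four generators `x_{ij}`. -/
abbrev FreeX (K : Type) [Field K] : Type := FreeAlgebra K (Fin 2 × Fin 2)

/-- The free associative `K`-algebra on the eight generators `x_{ij}, z_{ij}`. -/
abbrev Free8 (K : Type) [Field K] : Type := FreeAlgebra K ((Fin 2 × Fin 2) ⊕ (Fin 2 × Fin 2))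

/-- The generator `x_{ij}` of `Free8 K`. -/
def xg (K : Type) [Field K] (p : Fin 2 × Fin 2) : Free8 K := FreeAlgebra.ι K (Sum.inl p)

/-- The generator `z_{ij}` of `Free8 K`. -/
def zg (K : Type) [Field K] (p : Fin 2 × Fin 2) : Free8 K := FreeAlgebra.ι K (Sum.inr p)

/-- The relations `𝔛𝔷 = I₂` and `𝔷𝔛 = I₂` (entrywise); quotienting `Free8 K` by
the congruence they generate is the same as quotienting by the two-sided ideal
generated by the corresponding differences. -/
inductive ExRel (K : Type) [Field K] : Free8 K → Free8 K → Prop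
  | xz (i j : Fin 2) :
      ExRel K (∑ k : Fin 2, xg K (i, k) * zg K (k, j)) (if i = j then 1 else 0)
  | zx (i j : Fin 2) :
      ExRel K (∑ k : Fin 2, zg K (i, k) * xg K (k, j)) (if i = j then 1 else 0)

/-- The algebra `𝒜 = F / I`. -/
abbrev AlgA (K : Type) [Field K] : Type := RingQuot (ExRel K)

/-- The canonical map `φ` from the free algebra on the `x_{ij}` to `𝒜`. -/
noncomputable def phi (K : Type) [Field K] : FreeX K →ₐ[K] AlgA K :=
  FreeAlgebra.lift K (fun p => RingQuot.mkAlgHom K (ExRel K) (xg K p))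

end NCP

namespace NCP

open FreeAlgebra

variable (K : Type) [Field K]

/-- Left multiplication by the letter `p` on noncommutative power series, i.e. on functions on
words. -/
def leftMul {X : Type} [DecidableEq X] (p : X) : Module.End K (List X → K) where
  toFun v
    | [] => 0
    | q :: w => if q = p then v w else 0
  map_add' u v := by
    funext l
    rcases l with _ | ⟨q, w⟩
    · simp
    · by_cases h : q = p <;> simp [h]
  map_smul' c v := by
    funext l
    rcases l with _ | ⟨q, w⟩ <;> simp

@[simp]
lemma leftMul_nil {X : Type} [DecidableEq X] (p : X) (v : List X → K) :
    leftMul K p v [] = 0 := rfl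

@[simp]
lemma leftMul_cons {X : Type} [DecidableEq X] (p q : X) (v : List X → K) (w : List X) :
    leftMul K p v (q :: w) = if q = p then v w else 0 := rfl

/-- The coefficients of an element of the free algebra, as a function on words. -/
noncomputable def coeffs {X : Type} : FreeAlgebra K X →ₗ[K] (List X → K) where
  toFun f w := (equivMonoidAlgebraFreeMonoid f).coeff (FreeMonoid.ofList w)
  map_add' f g := by funext w; simp
  map_smul' c f := by funext w; simp

lemma coeffs_injective {X : Type} : Function.Injective (coeffs K (X := X)) := by
  intro f g h
  apply equivMonoidAlgebraFreeMonoid.injective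
  ext w
  exact congrFun h w.toList

lemma coeffs_ι_mul {X : Type} [DecidableEq X] (p : X) (f : FreeAlgebra K X) :
    coeffs K (ι K p * f) = leftMul K p (coeffs K f) := by
  have hι : equivMonoidAlgebraFreeMonoid (ι K p) =
      MonoidAlgebra.single (FreeMonoid.of p) (1 : K) := by
    simp [equivMonoidAlgebraFreeMonoid]
  funext l
  change (equivMonoidAlgebraFreeMonoid (ι K p * f)).coeff (FreeMonoid.ofList l) = _
  rw [map_mul, hι]
  rcases l with _ | ⟨q, w⟩
  · rw [leftMul_nil]
    apply MonoidAlgebra.coeff_single_mul_of_forall_mul_ne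
    intro d hd
    exact List.cons_ne_nil p d.toList (congrArg FreeMonoid.toList hd)
  · rw [leftMul_cons]
    split_ifs with h
    · subst h
      refine (MonoidAlgebra.coeff_single_mul_eq_mul_coeff (FreeMonoid.ofList w) ?_).trans
        (one_mul _)
      intro a _
      exact (mul_right_inj (FreeMonoid.of q) : _ ↔ a = FreeMonoid.ofList w)
    · apply MonoidAlgebra.coeff_single_mul_of_forall_mul_ne
      intro d hd
      exact h (List.cons.inj (congrArg FreeMonoid.toList hd)).1.symm

lemma lift_leftMul_coeffs {X : Type} [DecidableEq X] (f g : FreeAlgebra K X) :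
    lift K (leftMul K) f (coeffs K g) = coeffs K (f * g) := by
  induction f using FreeAlgebra.induction generalizing g with
  | grade0 r => simp [Module.algebraMap_end_apply, ← Algebra.smul_def]
  | grade1 p => rw [lift_ι_apply, coeffs_ι_mul]
  | mul a b ha hb => rw [map_mul, Module.End.mul_apply, hb, ha, mul_assoc]
  | add a b ha hb => rw [map_add, LinearMap.add_apply, ha, hb, add_mul, map_add]

lemma lift_leftMul_injective {X : Type} [DecidableEq X] :
    Function.Injective (lift K (leftMul K (X := X))) := by
  intro f g h
  apply coeffs_injective K
  simpa [lift_leftMul_coeffs] using LinearMap.congr_fun h (coeffs K 1)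

lemma lift_ι_add_algebraMap_injective {X : Type} (c : X → K) :
    Function.Injective (lift K fun p => ι K p + algebraMap K (FreeAlgebra K X) (c p)) := by
  have h : (lift K fun p => ι K p - algebraMap K (FreeAlgebra K X) (c p)).comp
      (lift K fun p => ι K p + algebraMap K (FreeAlgebra K X) (c p)) = AlgHom.id K _ := by
    ext p
    simp
  exact Function.LeftInverse.injective (DFunLike.congr_fun h)

/-- The identity matrix, as a family of scalars. -/
def oneEntry (p : Fin 2 × Fin 2) : K := if p.1 = p.2 then 1 else 0

/-- The `(i, j)` entry of `1 + Y` acting on power series, where `Y` is the matrix of letters. -/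
noncomputable def entry (p : Fin 2 × Fin 2) : Module.End K (List (Fin 2 × Fin 2) → K) :=
  leftMul K p + algebraMap K _ (oneEntry K p)

/-- The values of the `j`-th column of `(1 + Y)⁻¹` applied to `v`, by recursion on words. -/
def invColumn (j : Fin 2) (v : List (Fin 2 × Fin 2) → K) :
    List (Fin 2 × Fin 2) → Fin 2 → K
  | [], i => if i = j then v [] else 0
  | q :: w, i => (if i = j then v (q :: w) else 0) - if i = q.1 then invColumn j v w q.2 else 0

/-- The `(i, j)` entry of `(1 + Y)⁻¹` acting on power series. -/
def invEntry (p : Fin 2 × Fin 2) : Module.End K (List (Fin 2 × Fin 2) → K) where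
  toFun v l := invColumn K p.2 v l p.1
  map_add' u v := by
    funext l
    obtain ⟨i, j⟩ := p
    induction l generalizing i with
    | nil => by_cases h : i = j <;> simp [invColumn, h]
    | cons q w ih =>
      simp only [Pi.add_apply] at ih
      simp only [invColumn, Pi.add_apply, ih]
      split_ifs <;> ring
  map_smul' c v := by
    funext l
    obtain ⟨i, j⟩ := p
    induction l generalizing i with
    | nil => by_cases h : i = j <;> simp [invColumn, h]
    | cons q w ih =>
      simp only [Pi.smul_apply, smul_eq_mul, RingHom.id_apply] at ih
      simp only [invColumn, Pi.smul_apply, smul_eq_mul, RingHom.id_apply, ih]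
      split_ifs <;> ring

lemma entry_apply (i j : Fin 2) (v : List (Fin 2 × Fin 2) → K) (l : List (Fin 2 × Fin 2)) :
    entry K (i, j) v l = leftMul K (i, j) v l + if i = j then v l else 0 := by
  rw [entry, LinearMap.add_apply, Module.algebraMap_end_apply]
  by_cases h : i = j <;> simp [oneEntry, h]

lemma invEntry_nil (i j : Fin 2) (v : List (Fin 2 × Fin 2) → K) :
    invEntry K (i, j) v [] = if i = j then v [] else 0 := rfl

lemma invEntry_cons (i j a b : Fin 2) (v : List (Fin 2 × Fin 2) → K)
    (w : List (Fin 2 × Fin 2)) :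
    invEntry K (i, j) v ((a, b) :: w) =
      (if i = j then v ((a, b) :: w) else 0) - if i = a then invEntry K (b, j) v w else 0 := rfl

lemma sum_entry_mul_invEntry (i j : Fin 2) :
    ∑ k : Fin 2, entry K (i, k) * invEntry K (k, j) = if i = j then 1 else 0 := by
  refine LinearMap.ext fun v => funext fun l => ?_
  have hr : (if i = j then 1 else 0 : Module.End K (List (Fin 2 × Fin 2) → K)) v l =
      if i = j then v l else 0 := by split_ifs <;> rfl
  rw [hr]
  simp only [LinearMap.sum_apply, Finset.sum_apply, Module.End.mul_apply, entry_apply,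
    Finset.sum_add_distrib, Finset.sum_ite_eq, Finset.mem_univ, if_true]
  rcases l with _ | ⟨⟨a, b⟩, w⟩
  · simp [invEntry_nil]
  · have hs : ∑ k, leftMul K (i, k) (invEntry K (k, j) v) ((a, b) :: w) =
        if i = a then invEntry K (b, j) v w else 0 := by
      by_cases h : i = a
      · simp [h]
      · simp [h, Ne.symm h]
    rw [hs, invEntry_cons]
    ring

lemma sum_invEntry_mul_entry (i j : Fin 2) :
    ∑ k : Fin 2, invEntry K (i, k) * entry K (k, j) = if i = j then 1 else 0 := by
  refine LinearMap.ext fun v => funext fun l => ?_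
  have hr : (if i = j then 1 else 0 : Module.End K (List (Fin 2 × Fin 2) → K)) v l =
      if i = j then v l else 0 := by split_ifs <;> rfl
  rw [hr]
  simp only [LinearMap.sum_apply, Finset.sum_apply, Module.End.mul_apply]
  clear hr
  induction l generalizing i with
  | nil => simp [invEntry_nil, entry_apply]
  | cons q w ih =>
    obtain ⟨a, b⟩ := q
    have hs : ∑ k, (if i = a then invEntry K (b, k) (entry K (k, j) v) w else 0) =
        if i = a then (if b = j then v w else 0) else 0 := by
      rw [← ih b]
      split_ifs <;> simp
    simp only [invEntry_cons, Finset.sum_sub_distrib, hs, Finset.sum_ite_eq, Finset.mem_univ,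
      if_true, entry_apply, leftMul_cons, Prod.mk.injEq]
    by_cases h : i = a
    · simp [h]
    · simp [h, Ne.symm h]

/-- The action of `𝒜` on power series in which `𝔛` acts as `1 + Y`. -/
noncomputable def powerSeriesRep : AlgA K →ₐ[K] Module.End K (List (Fin 2 × Fin 2) → K) :=
  RingQuot.liftAlgHom K ⟨lift K (Sum.elim (entry K) (invEntry K)), by
    intro a b h
    cases h with
    | xz i j =>
      simp only [map_sum, map_mul, xg, zg, lift_ι_apply, Sum.elim_inl, Sum.elim_inr,
        sum_entry_mul_invEntry]
      split_ifs <;> simp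
    | zx i j =>
      simp only [map_sum, map_mul, xg, zg, lift_ι_apply, Sum.elim_inl, Sum.elim_inr,
        sum_invEntry_mul_entry]
      split_ifs <;> simp⟩

lemma powerSeriesRep_comp_phi :
    (powerSeriesRep K).comp (phi K) =
      (lift K (leftMul K)).comp
        (lift K fun p => ι K p + algebraMap K (FreeX K) (oneEntry K p)) := by
  ext1
  funext p
  simp [powerSeriesRep, phi, xg, entry]

end NCP

open NCP in
/-- The canonical map from the free algebra on the `x_{ij}`
to `𝒜 = F/I` is injective. -/
theorem statement_17 (K : Type) [Field K] : Function.Injective (phi K) := by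
  have h : Function.Injective ((powerSeriesRep K).comp (phi K)) := by
    rw [powerSeriesRep_comp_phi]
    exact (lift_leftMul_injective K).comp (lift_ι_add_algebraMap_injective K (oneEntry K))
  exact Function.Injective.of_comp (f := powerSeriesRep K) h
end

section
/- For every element f of the free associative K-algebra on the four generators x_{11}, x_{12}, x_{21}, x_{22} that is not a scalar multiple of the identity (f ∉ K·1), the image φ(f) is not a unit of 𝒜 = F/I. -/
namespace NCP

open Polynomial in
/-- Linear polynomials over a free monoid algebra whose leading coefficients generate a free
submonoid: no non-scalar noncommutative polynomial takes a unit value at them. -/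
lemma not_isUnit_lift_of_leading_code {K ι κ : Type} [Field K]
    (code : ι → FreeMonoid κ) (hcode : Function.Injective (FreeMonoid.lift code))
    (p : ι → Polynomial (MonoidAlgebra K (FreeMonoid κ)))
    (hdeg : ∀ i, (p i).natDegree ≤ 1)
    (hlead : ∀ i, (p i).coeff 1 = MonoidAlgebra.of K (FreeMonoid κ) (code i))
    (f : FreeAlgebra K ι) (hf : f ∉ Set.range (algebraMap K (FreeAlgebra K ι))) :
    ¬ IsUnit (FreeAlgebra.lift K p f) := by
  have hword (w : FreeMonoid ι) : (FreeMonoid.lift p w).natDegree ≤ w.length ∧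
      (FreeMonoid.lift p w).coeff w.length =
        MonoidAlgebra.of K (FreeMonoid κ) (FreeMonoid.lift code w) := by
    induction w using FreeMonoid.inductionOn' with
    | one => simp [MonoidAlgebra.one_def]
    | of_mul i w ih =>
      rw [map_mul, FreeMonoid.lift_eval_of, FreeMonoid.length_mul, FreeMonoid.length_of]
      refine ⟨natDegree_mul_le.trans (Nat.add_le_add (hdeg i) ih.1), ?_⟩
      rw [coeff_mul_add_eq_of_natDegree_le (hdeg i) ih.1, ih.2, hlead, ← map_mul,
        map_mul (FreeMonoid.lift code), FreeMonoid.lift_eval_of]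
  obtain ⟨g, rfl⟩ := FreeAlgebra.equivMonoidAlgebraFreeMonoid.symm.surjective f
  have hlift : FreeAlgebra.lift K p (FreeAlgebra.equivMonoidAlgebraFreeMonoid.symm g) =
      g.coeff.sum fun w r => r • FreeMonoid.lift p w := by
    rw [← MonoidAlgebra.lift_apply, ← AlgEquiv.coe_toAlgHom, ← AlgHom.comp_apply]
    refine DFunLike.congr_fun (MonoidAlgebra.algHom_ext' (FreeMonoid.hom_eq fun i => ?_)
      (by ext)) g
    simp [FreeAlgebra.equivMonoidAlgebraFreeMonoid]
  have hne : g.coeff.support.Nonempty := by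
    rw [Finsupp.support_nonempty_iff]
    intro h
    exact hf ⟨0, by rw [MonoidAlgebra.coeff_eq_zero.1 h, map_zero, map_zero]⟩
  obtain ⟨w₀, hw₀, hmax⟩ := Finset.exists_max_image _ FreeMonoid.length hne
  have hpos : w₀.length ≠ 0 := by
    intro h0
    refine hf ⟨g.coeff 1, ?_⟩
    rw [AlgEquiv.eq_symm_apply, AlgEquiv.commutes]
    ext w
    by_cases hw : w = 1
    · simp [hw, MonoidAlgebra.coe_algebraMap]
    · have : g.coeff w = 0 := by
        by_contra hgw
        have := hmax w (Finsupp.mem_support_iff.2 hgw)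
        exact hw (FreeMonoid.length_eq_zero.1 (by omega))
      simp [this, MonoidAlgebra.coe_algebraMap, Ne.symm hw]
  have hcoeff : ((FreeAlgebra.lift K p
      (FreeAlgebra.equivMonoidAlgebraFreeMonoid.symm g)).coeff w₀.length).coeff
        (FreeMonoid.lift code w₀) = g.coeff w₀ := by
    rw [hlift, Finsupp.sum, finsetSum_coeff, MonoidAlgebra.coeff_sum, Finsupp.finsetSum_apply,
      Finset.sum_eq_single_of_mem w₀ hw₀]
    · simp [(hword w₀).2]
    · intro w hw hne
      rw [coeff_smul]
      rcases (hmax w hw).lt_or_eq with hlt | heq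
      · simp [coeff_eq_zero_of_natDegree_lt ((hword w).1.trans_lt hlt)]
      · rw [← heq, (hword w).2]
        simp [hcode.ne hne]
  intro hu
  rw [coeff_eq_zero_of_natDegree_lt
    ((natDegree_eq_zero_of_isUnit hu).trans_lt (Nat.pos_of_ne_zero hpos))] at hcoeff
  exact Finsupp.mem_support_iff.1 hw₀ hcoeff.symm

/-- The word `α_i c δ_j` over the letters `a, c, d = 0, 1, 2`, with `α = (a, 1)`, `δ = (d, 1)`. -/
def codeword (p : Fin 2 × Fin 2) : FreeMonoid (Fin 3) :=
  ![FreeMonoid.of 0, 1] p.1 * FreeMonoid.of 1 * ![FreeMonoid.of 2, 1] p.2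

lemma two_cons_ne_toList_lift_codeword (l : List (Fin 3)) (w : FreeMonoid (Fin 2 × Fin 2)) :
    2 :: l ≠ FreeMonoid.toList (FreeMonoid.lift codeword w) := by
  cases w using FreeMonoid.casesOn with
  | one => exact List.cons_ne_nil _ _
  | of_mul p w =>
    obtain ⟨i, j⟩ := p
    rw [map_mul, FreeMonoid.lift_eval_of]
    fin_cases i <;> simp [codeword, mul_assoc]

lemma lift_codeword_injective : Function.Injective (FreeMonoid.lift codeword) := by
  intro v
  induction v using FreeMonoid.inductionOn' with
  | one =>
    intro w h
    cases w using FreeMonoid.casesOn with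
    | one => rfl
    | of_mul p w =>
      have h' := congrArg FreeMonoid.length h
      simp [codeword] at h'
      omega
  | of_mul p v ih =>
    intro w h
    cases w using FreeMonoid.casesOn with
    | one =>
      have h' := congrArg FreeMonoid.length h
      simp [codeword] at h'
    | of_mul q w =>
      obtain ⟨i, j⟩ := p
      obtain ⟨k, l⟩ := q
      have hv := two_cons_ne_toList_lift_codeword
      rw [map_mul, map_mul, FreeMonoid.lift_eval_of, FreeMonoid.lift_eval_of] at h
      have h' := congrArg FreeMonoid.toList h
      fin_cases i <;> fin_cases j <;> fin_cases k <;> fin_cases l <;>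
        simp [codeword, hv, (hv _ _).symm] at h' <;>
        exact congrArg _ (ih h')

/-- Mutually inverse matrices over a `K`-algebra define a point of `𝒜`. -/
lemma exists_algHom_comp_phi_eq_lift {K S : Type} [Field K] [Ring S] [Algebra K S]
    (x z : Matrix (Fin 2) (Fin 2) S) (hxz : x * z = 1) (hzx : z * x = 1) :
    ∃ Φ : AlgA K →ₐ[K] S, Φ.comp (phi K) = FreeAlgebra.lift K fun p => x p.1 p.2 := by
  let F : Free8 K →ₐ[K] S :=
    FreeAlgebra.lift K (Sum.elim (fun p => x p.1 p.2) fun p => z p.1 p.2)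
  have hF : ∀ ⦃u v⦄, ExRel K u v → F u = F v := by
    rintro _ _ (⟨i, j⟩ | ⟨i, j⟩)
    · have h := congrFun₂ hxz i j
      rw [Matrix.mul_apply, Matrix.one_apply] at h
      simpa [F, xg, zg, apply_ite F] using h
    · have h := congrFun₂ hzx i j
      rw [Matrix.mul_apply, Matrix.one_apply] at h
      simpa [F, xg, zg, apply_ite F] using h
  refine ⟨RingQuot.liftAlgHom K ⟨F, hF⟩, ?_⟩
  ext p
  simp [phi, F, xg]

lemma continuant_mul_inverse {S : Type} [Ring S] (a t d : S) :
    !![a + (a * t - 1) * d, a * t - 1; 1 + t * d, t] *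
      !![t, 1 - t * a; -1 - d * t, a - d + d * t * a] = 1 := by
  simp only [Matrix.mul_fin_two, Matrix.one_fin_two]
  congr! <;> noncomm_ring

lemma inverse_mul_continuant {S : Type} [Ring S] (a t d : S) :
    !![t, 1 - t * a; -1 - d * t, a - d + d * t * a] *
      !![a + (a * t - 1) * d, a * t - 1; 1 + t * d, t] = 1 := by
  simp only [Matrix.mul_fin_two, Matrix.one_fin_two]
  congr! <;> noncomm_ring

end NCP

open NCP in
/-- The image under `φ` of any non-scalar element of the free
algebra on the `x_{ij}` is not a unit of `𝒜 = F/I`. -/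
theorem statement_18 (K : Type) [Field K] (f : FreeX K)
    (hf : f ∉ Set.range (algebraMap K (FreeX K))) :
    ¬ IsUnit (phi K f) := by
  let s (i : Fin 3) : MonoidAlgebra K (FreeMonoid (Fin 3)) := .of K _ (.of i)
  let a := Polynomial.C (s 0)
  let τ := Polynomial.C (s 1) * Polynomial.X
  let d := Polynomial.C (s 2)
  let x : Matrix (Fin 2) (Fin 2) (Polynomial (MonoidAlgebra K (FreeMonoid (Fin 3)))) :=
    !![a + (a * τ - 1) * d, a * τ - 1; 1 + τ * d, τ]
  let z : Matrix (Fin 2) (Fin 2) (Polynomial (MonoidAlgebra K (FreeMonoid (Fin 3)))) :=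
    !![τ, 1 - τ * a; -1 - d * τ, a - d + d * τ * a]
  let u : Matrix (Fin 2) (Fin 2) (MonoidAlgebra K (FreeMonoid (Fin 3))) :=
    !![s 0 * s 1 * s 2, s 0 * s 1; s 1 * s 2, s 1]
  let v : Matrix (Fin 2) (Fin 2) (MonoidAlgebra K (FreeMonoid (Fin 3))) :=
    !![s 0 - s 2, -1; 1, 0]
  have hx (i j : Fin 2) : x i j = Polynomial.C (u i j) * Polynomial.X + Polynomial.C (v i j) := by
    have hX := Polynomial.X_mul_C (s 2)
    fin_cases i <;> fin_cases j <;>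
      simp [x, u, v, a, τ, d, sub_mul, mul_assoc, hX] <;> abel
  obtain ⟨Φ, hΦ⟩ := exists_algHom_comp_phi_eq_lift (K := K) x z
    (continuant_mul_inverse a τ d) (inverse_mul_continuant a τ d)
  intro hu
  refine not_isUnit_lift_of_leading_code codeword lift_codeword_injective
    (fun p => x p.1 p.2) (fun p => ?_) (fun p => ?_) f hf ?_
  · rw [hx]
    exact Polynomial.natDegree_linear_le
  · obtain ⟨i, j⟩ := p
    rw [hx]
    fin_cases i <;> fin_cases j <;>
      simp [u, s, codeword, MonoidAlgebra.single_mul_single, Polynomial.coeff_C]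
  · rw [← hΦ]
    exact hu.map Φ
end
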